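/- Let E be the Euclidean plane (EuclideanSpace ℝ (Fin 2)). Let a, b, p, q ∈ E and suppose: (i) some point x lies in the open segment between a and b and also in the open segment between p and q; (ii) a, p, q are not collinear and b, p, q are not collinear; (iii) a ∉ lens(p,q) and b ∉ lens(p,q); (iv) p ∉ lens(a,b); (v) q ∈ lens(a,b), i.e. dist q a < dist a b and dist q b < dist a b. Then dist a p ≥ dist p q and dist b p ≥ dist p q. -/

import Mathlib

/-!
If `dist a p < dist p q`, then `a ∉ lens p q` and `q ∈ lens a b` give
`dist a p < dist p q ≤ dist a q < dist a b`, so `p ∉ lens a b` forces `dist a b ≤ dist p b`.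
The diagonals `ab` and `pq` are thus together no longer than the opposite sides `aq` and `pb`.
By the triangle inequality at the crossing point equality holds, and strict convexity puts
`a` and `p` on one ray from `b`, at equal distances from `b`; hence `a = p`.
-/

/-- The open lens of a pair of points, as in the definition of the relative neighbourhood graph:
the points closer to both `u` and `v` than these are to each other. -/
def lens {P : Type*} [PseudoMetricSpace P] (u v : P) : Set P :=
  {z | dist z u < dist u v ∧ dist z v < dist u v}

lemma lens_comm {P : Type*} [PseudoMetricSpace P] (u v : P) : lens u v = lens v u := by
  ext z
  simp only [lens, Set.mem_ofPred_eq, dist_comm u v, and_comm]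

section Wbtw

variable {V P : Type*}

lemma dist_add_dist_le_of_wbtw [SeminormedAddCommGroup V] [NormedSpace ℝ V] [PseudoMetricSpace P]
    [NormedAddTorsor V P] {a b p q x : P} (hab : Wbtw ℝ a x b) (hpq : Wbtw ℝ p x q) :
    dist a q + dist p b ≤ dist a b + dist p q := by
  linarith [hab.dist_add_dist, hpq.dist_add_dist, dist_triangle a x q, dist_triangle p x b]

variable [NormedAddCommGroup V] [NormedSpace ℝ V] [MetricSpace P] [NormedAddTorsor V P]

lemma eq_of_wbtw_of_wbtw_of_dist_eq {o x y z : P} (hy : Wbtw ℝ o x y) (hz : Wbtw ℝ o x z)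
    (hxo : x ≠ o) (hdist : dist y o = dist z o) : y = z := by
  have hray : SameRay ℝ (y -ᵥ o) (z -ᵥ o) :=
    hy.sameRay_vsub_left.symm.trans hz.sameRay_vsub_left
      fun h => (hxo (vsub_eq_zero_iff_eq.1 h)).elim
  rw [dist_eq_norm_vsub V, dist_eq_norm_vsub V] at hdist
  exact vsub_left_cancel (hray.eq_of_norm_eq hdist)

variable [StrictConvexSpace ℝ V] {a b p q x : P}

lemma dist_add_dist_eq_iff_of_wbtw (hab : Wbtw ℝ a x b) (hpq : Wbtw ℝ p x q) :
    dist a q + dist p b = dist a b + dist p q ↔ Wbtw ℝ a x q ∧ Wbtw ℝ p x b := by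
  have hab_dist := hab.dist_add_dist
  have hpq_dist := hpq.dist_add_dist
  constructor
  · intro h
    have haq_le := dist_triangle a x q
    have hpb_le := dist_triangle p x b
    exact ⟨dist_add_dist_eq_iff.1 (by linarith), dist_add_dist_eq_iff.1 (by linarith)⟩
  · rintro ⟨haq, hpb⟩
    linarith [haq.dist_add_dist, hpb.dist_add_dist]

lemma dist_le_dist_of_wbtw_of_notMem_lens (hab : Wbtw ℝ a x b) (hpq : Wbtw ℝ p x q) (hap : a ≠ p)
    (ha : a ∉ lens p q) (hp : p ∉ lens a b) (hq : dist q a < dist a b) :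
    dist p q ≤ dist a p := by
  by_contra! hlt
  rw [dist_comm q a] at hq
  have hpq_le : dist p q ≤ dist a q := not_lt.1 fun h => ha ⟨hlt, h⟩
  have hpa_lt : dist p a < dist a b := by
    rw [dist_comm p a]
    exact (hlt.trans_le hpq_le).trans hq
  have hab_le : dist a b ≤ dist p b := not_lt.1 fun h => hp ⟨hpa_lt, h⟩
  have hsum := dist_add_dist_le_of_wbtw hab hpq
  obtain ⟨haq, hpb⟩ := (dist_add_dist_eq_iff_of_wbtw hab hpq).1 (by linarith)
  have hxb : x ≠ b := by
    rintro rfl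
    linarith [haq.dist_add_dist, dist_nonneg (x := x) (y := q)]
  exact hap (eq_of_wbtw_of_wbtw_of_dist_eq hab.symm hpb.symm hxb (by linarith))

theorem one_endpoint_in_lens_far_general (hab : Wbtw ℝ a x b) (hpq : Wbtw ℝ p x q)
    (hap : a ≠ p) (hbp : b ≠ p) (ha : a ∉ lens p q) (hb : b ∉ lens p q) (hp : p ∉ lens a b)
    (hq : q ∈ lens a b) : dist p q ≤ dist a p ∧ dist p q ≤ dist b p :=
  ⟨dist_le_dist_of_wbtw_of_notMem_lens hab hpq hap ha hp hq.1,
    dist_le_dist_of_wbtw_of_notMem_lens hab.symm hpq hbp hb (lens_comm a b ▸ hp)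
      (lens_comm a b ▸ hq).1⟩

end Wbtw

/-- Case 2 of Lemma 3: when the crossing edge `pq` has exactly one endpoint
`q` inside the lens of `(a,b)`, the other endpoint `p` is at distance at
least `dist p q` from both `a` and `b`. -/
theorem one_endpoint_in_lens_far
    (a b p q : EuclideanSpace ℝ (Fin 2))
    (x : EuclideanSpace ℝ (Fin 2))
    (hx_ab : x ∈ openSegment ℝ a b)
    (hx_pq : x ∈ openSegment ℝ p q)
    (hcol_a : ¬ Collinear ℝ ({a, p, q} : Set (EuclideanSpace ℝ (Fin 2))))
    (hcol_b : ¬ Collinear ℝ ({b, p, q} : Set (EuclideanSpace ℝ (Fin 2))))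
    (ha_lens : ¬ (dist a p < dist p q ∧ dist a q < dist p q))
    (hb_lens : ¬ (dist b p < dist p q ∧ dist b q < dist p q))
    (hp_lens : ¬ (dist p a < dist a b ∧ dist p b < dist a b))
    (hq_lens : dist q a < dist a b ∧ dist q b < dist a b) :
    dist a p ≥ dist p q ∧ dist b p ≥ dist p q :=
  one_endpoint_in_lens_far_general (mem_segment_iff_wbtw.1 (openSegment_subset_segment ℝ a b hx_ab))
    (mem_segment_iff_wbtw.1 (openSegment_subset_segment ℝ p q hx_pq))
    (ne₁₂_of_not_collinear hcol_a) (ne₁₂_of_not_collinear hcol_b) ha_lens hb_lens hp_lens hq_lens
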